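/- arXiv:1402.3496 — 3 statements merged into one kernel-verified Lean document; each statement's English description precedes it below -/
import Mathlib

section
/- Let p ∈ ℝ^n and p' ∈ ℝ^{n'} be probability vectors, let g ∈ ℝ^n and g' ∈ ℝ^{n'} be strictly positive probability vectors with all p_i > 0 and p'_j > 0, and let G ∈ ℝ^{n'×n} be a matrix with nonnegative entries whose columns each sum to 1 and which satisfies G p = p' and G g = g'. Then the relative entropy is monotone: Σ_j p'_j · log(p'_j / g'_j) ≤ Σ_i p_i · log(p_i / g_i). -/
/-!
Relative entropy is the `f`-divergence of the convex function `f x = x log x`. Each coordinate of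
`G p / G g` is an average of the ratios `p i / g i` with weights `G j i * g i`, so Jensen's
inequality bounds the `j`-th term of the output divergence by `∑ i, G j i * (g i * f (p i / g i))`.
Summing over `j` and using that the columns of `G` sum to one gives the input divergence.
-/

open Set Matrix

section Jensen

variable {𝕜 E β ι : Type*} [Field 𝕜] [LinearOrder 𝕜] [IsStrictOrderedRing 𝕜]
  [AddCommGroup E] [Module 𝕜 E]
  [AddCommGroup β] [PartialOrder β] [IsOrderedAddMonoid β] [Module 𝕜 β] [IsStrictOrderedModule 𝕜 β]

lemma sum_smul_map_centerMass_le_of_convexOn {D : Set E} {f : E → β} (hf : ConvexOn 𝕜 D f)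
    {s : Finset ι} {w : ι → 𝕜} {x : ι → E} (hw : ∀ i ∈ s, 0 ≤ w i) (hx : ∀ i ∈ s, x i ∈ D) :
    (∑ i ∈ s, w i) • f (s.centerMass w x) ≤ ∑ i ∈ s, w i • f (x i) := by
  rcases (Finset.sum_nonneg hw).eq_or_lt' with hzero | hpos
  · have hw_zero := (Finset.sum_eq_zero_iff_of_nonneg hw).mp hzero
    rw [hzero, zero_smul, Finset.sum_eq_zero fun i hi => by rw [hw_zero i hi, zero_smul]]
  · calc (∑ i ∈ s, w i) • f (s.centerMass w x)
        ≤ (∑ i ∈ s, w i) • s.centerMass w (f ∘ x) :=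
          smul_le_smul_of_nonneg_left (hf.map_centerMass_le hw hpos hx) hpos.le
      _ = ∑ i ∈ s, w i • f (x i) := smul_inv_smul₀ hpos.ne' _

end Jensen

lemma mulVec_apply_eq_zero_of_nonneg {R ι κ : Type*} [Semiring R] [PartialOrder R]
    [IsOrderedRing R] [NoZeroDivisors R] [Fintype ι] {G : Matrix κ ι R} {p g : ι → R}
    {j : κ} (hG : ∀ i, 0 ≤ G j i) (hg : ∀ i, 0 ≤ g i) (hpg : ∀ i, g i = 0 → p i = 0)
    (hj : (G *ᵥ g) j = 0) : (G *ᵥ p) j = 0 := by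
  have hterm := (Finset.sum_eq_zero_iff_of_nonneg fun i _ => mul_nonneg (hG i) (hg i)).mp hj
  exact Finset.sum_eq_zero fun i hi =>
    mul_eq_zero.mpr ((mul_eq_zero.mp (hterm i hi)).imp_right (hpg i))

/-- The `f`-divergence of `p` from `g`, for finite weight vectors. Coordinates with `g i = 0`
contribute zero, which is the usual value only when `p i = 0` there. -/
noncomputable def fDivergence {ι : Type*} [Fintype ι] (f : ℝ → ℝ) (p g : ι → ℝ) : ℝ :=
  ∑ i, g i * f (p i / g i)

section Divergence

variable {ι κ : Type*} [Fintype ι] {p g : ι → ℝ}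

lemma fDivergence_mul_log (hpg : ∀ i, g i = 0 → p i = 0) :
    fDivergence (fun x => x * Real.log x) p g = ∑ i, p i * Real.log (p i / g i) :=
  Finset.sum_congr rfl fun i _ => by rw [← mul_assoc, mul_div_cancel_of_imp' (hpg i)]

lemma mulVec_mul_map_div_le {f : ℝ → ℝ} (hf : ConvexOn ℝ (Ici 0) f) {G : Matrix κ ι ℝ}
    (hp : ∀ i, 0 ≤ p i) (hg : ∀ i, 0 ≤ g i) (hpg : ∀ i, g i = 0 → p i = 0) {j : κ}
    (hG : ∀ i, 0 ≤ G j i) :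
    (G *ᵥ g) j * f ((G *ᵥ p) j / (G *ᵥ g) j) ≤ ∑ i, G j i * (g i * f (p i / g i)) := by
  have hmean : Finset.univ.centerMass (fun i => G j i * g i) (fun i => p i / g i) =
      (G *ᵥ p) j / (G *ᵥ g) j := by
    simp only [Finset.centerMass, smul_eq_mul, mul_assoc, mul_div_cancel_of_imp' (hpg _),
      mulVec, dotProduct, ← div_eq_inv_mul]
  have hjensen := sum_smul_map_centerMass_le_of_convexOn hf (s := Finset.univ)
    (fun i _ => mul_nonneg (hG i) (hg i)) (fun i _ => div_nonneg (hp i) (hg i))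
  simpa only [hmean, smul_eq_mul, mul_assoc, mulVec, dotProduct] using hjensen

theorem fDivergence_mulVec_le [Fintype κ] {f : ℝ → ℝ} (hf : ConvexOn ℝ (Ici 0) f)
    {G : Matrix κ ι ℝ} (hp : ∀ i, 0 ≤ p i) (hg : ∀ i, 0 ≤ g i) (hpg : ∀ i, g i = 0 → p i = 0)
    (hG : ∀ j i, 0 ≤ G j i) (hGcol : ∀ i, ∑ j, G j i = 1) :
    fDivergence f (G *ᵥ p) (G *ᵥ g) ≤ fDivergence f p g :=
  calc fDivergence f (G *ᵥ p) (G *ᵥ g)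
      ≤ ∑ j, ∑ i, G j i * (g i * f (p i / g i)) :=
        Finset.sum_le_sum fun j _ => mulVec_mul_map_div_le hf hp hg hpg (hG j)
    _ = ∑ i, (∑ j, G j i) * (g i * f (p i / g i)) := by
        rw [Finset.sum_comm]
        simp only [Finset.sum_mul]
    _ = fDivergence f p g := by simp only [hGcol, one_mul, fDivergence]

theorem relativeEntropy_monotone_under_gibbsStochastic_general [Fintype κ] {G : Matrix κ ι ℝ}
    (hp : ∀ i, 0 ≤ p i) (hg : ∀ i, 0 ≤ g i) (hpg : ∀ i, g i = 0 → p i = 0)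
    (hG : ∀ j i, 0 ≤ G j i) (hGcol : ∀ i, ∑ j, G j i = 1) :
    ∑ j, (G *ᵥ p) j * Real.log ((G *ᵥ p) j / (G *ᵥ g) j) ≤
      ∑ i, p i * Real.log (p i / g i) := by
  rw [← fDivergence_mul_log hpg,
    ← fDivergence_mul_log fun j => mulVec_apply_eq_zero_of_nonneg (hG j) hg hpg]
  exact fDivergence_mulVec_le Real.convexOn_mul_log hp hg hpg hG hGcol

end Divergence

/-- Monotonicity of relative entropy under Gibbs-stochastic matrices. -/
theorem relativeEntropy_monotone_under_gibbsStochastic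
    {n n' : ℕ} (p g : Fin n → ℝ) (p' g' : Fin n' → ℝ)
    (hp : ∀ i, 0 < p i) (hps : ∑ i, p i = 1)
    (hp' : ∀ j, 0 < p' j) (hps' : ∑ j, p' j = 1)
    (hg : ∀ i, 0 < g i) (hgs : ∑ i, g i = 1)
    (hg' : ∀ j, 0 < g' j) (hgs' : ∑ j, g' j = 1)
    (G : Matrix (Fin n') (Fin n) ℝ)
    (hG : ∀ j i, 0 ≤ G j i)
    (hGcol : ∀ i, ∑ j, G j i = 1)
    (hGp : G.mulVec p = p') (hGg : G.mulVec g = g') :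
    ∑ j, p' j * Real.log (p' j / g' j) ≤ ∑ i, p i * Real.log (p i / g i) := by
  subst hGp hGg
  exact relativeEntropy_monotone_under_gibbsStochastic_general (fun i => (hp i).le)
    (fun i => (hg i).le) (fun i hgi => absurd hgi (hg i).ne') hG hGcol
end

section
/- Let p ∈ ℝ^n and p' ∈ ℝ^{n'} be probability vectors and let g ∈ ℝ^n and g' ∈ ℝ^{n'} be strictly positive probability vectors. If there exists a matrix G ∈ ℝ^{n'×n} with nonnegative entries whose columns each sum to 1 and which satisfies G p = p' and G g = g', then for every real number t one has Σ_j g'_j · max(p'_j/g'_j − t, 0) ≤ Σ_i g_i · max(p_i/g_i − t, 0). -/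
/-!
Each ratio `(G p)_j / (G g)_j` is the average of the ratios `p_i / g_i` with weights `G_ji g_i`, so
Jensen's inequality for a convex `φ` bounds `(G g)_j φ((G p)_j / (G g)_j)` by
`∑ i, G_ji g_i φ(p_i / g_i)`. Summing over `j`, the unit column sums remove `G` from the right-hand
side: this is the monotonicity of `φ`-divergences under stochastic maps. The inequality for the
parameter `t` is the case `φ x = max (x - t) 0`.
-/

open Matrix

theorem sum_smul_map_centerMass_le {𝕜 E β ι : Type*} [Field 𝕜] [LinearOrder 𝕜]
    [IsStrictOrderedRing 𝕜] [AddCommGroup E] [AddCommGroup β] [PartialOrder β]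
    [IsOrderedAddMonoid β] [Module 𝕜 E] [Module 𝕜 β] [IsStrictOrderedModule 𝕜 β]
    {s : Set E} {φ : E → β} {u : Finset ι} {w : ι → 𝕜} {x : ι → E}
    (hφ : ConvexOn 𝕜 s φ) (hw : ∀ i ∈ u, 0 ≤ w i) (hw_pos : 0 < ∑ i ∈ u, w i)
    (hx : ∀ i ∈ u, x i ∈ s) :
    (∑ i ∈ u, w i) • φ (u.centerMass w x) ≤ ∑ i ∈ u, w i • φ (x i) :=
  calc (∑ i ∈ u, w i) • φ (u.centerMass w x)
      ≤ (∑ i ∈ u, w i) • u.centerMass w (φ ∘ x) :=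
        smul_le_smul_of_nonneg_left (hφ.map_centerMass_le hw hw_pos hx) hw_pos.le
    _ = ∑ i ∈ u, w i • φ (x i) := smul_inv_smul₀ hw_pos.ne' _

section Matrix

variable {R 𝕜 m n : Type*} [Fintype n]

theorem sum_mulVec_of_sum_col_eq_one [NonAssocSemiring R] [Fintype m] {G : Matrix m n R}
    (hG : ∀ i, ∑ j, G j i = 1) (v : n → R) : ∑ j, (G *ᵥ v) j = ∑ i, v i := by
  simp only [mulVec, dotProduct]
  rw [Finset.sum_comm]
  simp only [← Finset.sum_mul, hG, one_mul]

variable [Field 𝕜] {G : Matrix m n 𝕜} {g : n → 𝕜}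

theorem mulVec_div_mulVec_eq_centerMass (hg : ∀ i, g i ≠ 0) (p : n → 𝕜) (j : m) :
    (G *ᵥ p) j / (G *ᵥ g) j =
      Finset.univ.centerMass (fun i ↦ G j i * g i) (fun i ↦ p i / g i) := by
  have mul_ratio (i : n) : G j i * g i * (p i / g i) = G j i * p i := by
    rw [mul_assoc, mul_div_cancel₀ _ (hg i)]
  simp only [Finset.centerMass, smul_eq_mul, mul_ratio]
  exact div_eq_inv_mul _ _

variable [LinearOrder 𝕜] [IsStrictOrderedRing 𝕜] {s : Set 𝕜} {φ : 𝕜 → 𝕜} {p : n → 𝕜}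

theorem mulVec_mul_map_div_le_s3 (hφ : ConvexOn 𝕜 s φ) (hs : ∀ i, p i / g i ∈ s)
    (hg : ∀ i, 0 < g i) {j : m} (hG : ∀ i, 0 ≤ G j i) (hGg : 0 < (G *ᵥ g) j) :
    (G *ᵥ g) j * φ ((G *ᵥ p) j / (G *ᵥ g) j) ≤ (G *ᵥ fun i ↦ g i * φ (p i / g i)) j := by
  rw [mulVec_div_mulVec_eq_centerMass (fun i ↦ (hg i).ne')]
  simpa only [mulVec, dotProduct, smul_eq_mul, mul_assoc] using
    sum_smul_map_centerMass_le hφ (fun i _ ↦ mul_nonneg (hG i) (hg i).le) hGg (fun i _ ↦ hs i)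

end Matrix

theorem convexOn_max_sub_zero {R : Type*} [Ring R] [LinearOrder R] [IsStrictOrderedRing R]
    (t : R) : ConvexOn R Set.univ fun x ↦ max (x - t) 0 :=
  ((convexOn_id convex_univ).sub (concaveOn_const t convex_univ)).sup
    (convexOn_const 0 convex_univ)

theorem gibbsStochastic_imp_plusPart_ineq_general {𝕜 m n : Type*} [Field 𝕜] [LinearOrder 𝕜]
    [IsStrictOrderedRing 𝕜] [Fintype m] [Fintype n] {G : Matrix m n 𝕜} {p g : n → 𝕜}
    {s : Set 𝕜} {φ : 𝕜 → 𝕜} (hφ : ConvexOn 𝕜 s φ) (hs : ∀ i, p i / g i ∈ s)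
    (hg : ∀ i, 0 < g i) (hGg : ∀ j, 0 < (G *ᵥ g) j) (hG : ∀ j i, 0 ≤ G j i)
    (hG_sum : ∀ i, ∑ j, G j i = 1) :
    ∑ j, (G *ᵥ g) j * φ ((G *ᵥ p) j / (G *ᵥ g) j) ≤ ∑ i, g i * φ (p i / g i) :=
  calc ∑ j, (G *ᵥ g) j * φ ((G *ᵥ p) j / (G *ᵥ g) j)
      ≤ ∑ j, (G *ᵥ fun i ↦ g i * φ (p i / g i)) j :=
        Finset.sum_le_sum fun j _ ↦ mulVec_mul_map_div_le_s3 hφ hs hg (hG j) (hGg j)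
    _ = ∑ i, g i * φ (p i / g i) := sum_mulVec_of_sum_col_eq_one hG_sum _

/-- Existence of a Gibbs-stochastic matrix implies the
`(r - t)₊` inequalities (condition (d) of the mixing-distance theorem). -/
theorem gibbsStochastic_imp_plusPart_ineq
    {n n' : ℕ} (p g : Fin n → ℝ) (p' g' : Fin n' → ℝ)
    (hp : ∀ i, 0 ≤ p i) (hps : ∑ i, p i = 1)
    (hp' : ∀ j, 0 ≤ p' j) (hps' : ∑ j, p' j = 1)
    (hg : ∀ i, 0 < g i) (hgs : ∑ i, g i = 1)
    (hg' : ∀ j, 0 < g' j) (hgs' : ∑ j, g' j = 1)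
    (hex : ∃ G : Matrix (Fin n') (Fin n) ℝ,
      (∀ j i, 0 ≤ G j i) ∧ (∀ i, ∑ j, G j i = 1) ∧
      G.mulVec p = p' ∧ G.mulVec g = g') :
    ∀ t : ℝ, ∑ j, g' j * max (p' j / g' j - t) 0 ≤ ∑ i, g i * max (p i / g i - t) 0 := by
  obtain ⟨G, hG, hG_sum, rfl, rfl⟩ := hex
  exact fun t ↦ gibbsStochastic_imp_plusPart_ineq_general (convexOn_max_sub_zero t)
    (fun _ ↦ Set.mem_univ _) hg hg' hG hG_sum
end

section
/- Let p ∈ ℝ^n and p' ∈ ℝ^{n'} be probability vectors and let g ∈ ℝ^n and g' ∈ ℝ^{n'} be strictly positive probability vectors. Then the following are equivalent: (i) there exists a matrix G ∈ ℝ^{n'×n} with nonnegative entries whose columns each sum to 1 and which satisfies G p = p' and G g = g'; (ii) for every real number t one has Σ_j g'_j · |p'_j/g'_j − t| ≤ Σ_i g_i · |p_i/g_i − t|. -/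
/-!
A column-stochastic matrix contracts the `ℓ¹` norm; applied to `p - t • g` this is the easy
direction. Conversely, the inequalities for `|x - t|` pass to the hinges `(x - t)⁺`, and on a
finite set every convex function is an affine function plus a nonnegative combination of hinges, so
`∑ j, g' j * φ (p' j / g' j) ≤ ∑ i, g i * φ (p i / g i)` for every convex `φ`. If no stochastic
matrix existed, Hahn–Banach would separate `(p', g')` from the compact convex set of all
`(G p, G g)` by affine functions `ℓ j`, one for each row, and the inequality would fail for the
convex function `max_j ℓ j`.
-/

open Finset

section Contraction

variable {ι κ : Type*} [Fintype ι] [Fintype κ]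

theorem sum_abs_mulVec_le {G : Matrix κ ι ℝ} (hG : ∀ j i, 0 ≤ G j i)
    (hG_sum : ∀ i, ∑ j, G j i = 1) (v : ι → ℝ) :
    ∑ j, |G.mulVec v j| ≤ ∑ i, |v i| := by
  calc ∑ j, |G.mulVec v j| ≤ ∑ j, ∑ i, G j i * |v i| := by
        refine sum_le_sum fun j _ => (abs_sum_le_sum_abs _ _).trans_eq ?_
        simp only [abs_mul, abs_of_nonneg (hG j _)]
    _ = ∑ i, |v i| := by
        rw [sum_comm]
        simp only [← sum_mul, hG_sum, one_mul]

theorem sum_mul_abs_div_sub {g : ι → ℝ} (hg : ∀ i, 0 < g i) (p : ι → ℝ) (t : ℝ) :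
    ∑ i, g i * |p i / g i - t| = ∑ i, |(p - t • g) i| := by
  refine sum_congr rfl fun i _ => ?_
  calc g i * |p i / g i - t| = |g i * (p i / g i - t)| := by rw [abs_mul, abs_of_pos (hg i)]
    _ = |(p - t • g) i| := by
        rw [mul_sub, mul_div_cancel₀ _ (hg i).ne', mul_comm (g i) t]
        rfl

end Contraction

section HingeInterpolation

theorem sum_insert_update_mul {α : Type*} [DecidableEq α] {S : Finset α} {k : α} (hk : k ∉ S)
    (c f : α → ℝ) (d : ℝ) :
    ∑ t ∈ insert k S, Function.update c k d t * f t = d * f k + ∑ t ∈ S, c t * f t := by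
  rw [sum_insert hk, Function.update_self]
  congr 1
  exact sum_congr rfl fun t ht => by rw [Function.update_of_ne (ne_of_mem_of_not_mem ht hk)]

theorem sum_hinge_of_forall_le {S : Finset ℝ} {k m : ℝ} (hS : ∀ t ∈ S, t ≤ k) (hkm : k ≤ m)
    (c : ℝ → ℝ) :
    ∑ t ∈ S, c t * (m - t)⁺ = ∑ t ∈ S, c t * (k - t)⁺ + (∑ t ∈ S, c t) * (m - k) := by
  rw [sum_mul, ← sum_add_distrib]
  refine sum_congr rfl fun t ht => ?_
  rw [posPart_of_nonneg (sub_nonneg.2 ((hS t ht).trans hkm)),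
    posPart_of_nonneg (sub_nonneg.2 (hS t ht))]
  ring

variable {φ : ℝ → ℝ}

-- The slope bound lets the induction add the next hinge at `m` with a nonnegative coefficient.
theorem exists_eq_affine_add_sum_hinge_of_forall_lt (hφ : ConvexOn ℝ Set.univ φ) (S : Finset ℝ) :
    ∀ m, (∀ t ∈ S, t < m) → ∃ (a b : ℝ) (c : ℝ → ℝ), (∀ t, 0 ≤ c t) ∧
      (∀ x ∈ insert m S, φ x = a * x + b + ∑ t ∈ S, c t * (x - t)⁺) ∧
      ∀ y, m < y → a + ∑ t ∈ S, c t ≤ (φ y - φ m) / (y - m) := by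
  induction S using Finset.induction_on_max with
  | empty =>
    intro m _
    refine ⟨φ m - φ (m - 1), φ m - (φ m - φ (m - 1)) * m, 0, fun _ => le_rfl, by simp,
      fun y hy => ?_⟩
    simpa using hφ.slope_mono_adjacent (Set.mem_univ (m - 1)) (Set.mem_univ y) (by linarith) hy
  | insert k S hk ih =>
    intro m hm
    have hkm : k < m := hm k (mem_insert_self k S)
    obtain ⟨a, b, c, hc, hinterp, hslope⟩ := ih k hk
    set σ := (φ m - φ k) / (m - k)
    set d := σ - (a + ∑ t ∈ S, c t) with hd
    have hsum := sum_insert_update_mul (fun hkS => (hk k hkS).false) c (d := d)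
    refine ⟨a, b, Function.update c k d, fun t => ?_, fun x hx => ?_, fun y hy => ?_⟩
    · rcases eq_or_ne t k with rfl | htk
      · simpa only [Function.update_self, hd, sub_nonneg] using hslope m hkm
      · simpa only [Function.update_of_ne htk] using hc t
    · rw [hsum]
      rcases mem_insert.1 hx with rfl | hx
      · have hσ : σ * (x - k) = φ x - φ k := div_mul_cancel₀ _ (sub_pos.2 hkm).ne'
        rw [sum_hinge_of_forall_le (fun t ht => (hk t ht).le) hkm.le,
          posPart_of_nonneg (sub_nonneg.2 hkm.le)]
        linear_combination hinterp k (mem_insert_self k S) - hσ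
      · have hxk : x ≤ k :=
          (forall_mem_insert k S (· ≤ k)).2 ⟨le_rfl, fun t ht => (hk t ht).le⟩ x hx
        rw [posPart_of_nonpos (sub_nonpos.2 hxk), mul_zero, zero_add]
        exact hinterp x hx
    · have hσ_eq : a + ∑ t ∈ insert k S, Function.update c k d t = σ := by
        linear_combination (by simpa using hsum 1 : _ = d + ∑ t ∈ S, c t)
      rw [hσ_eq]
      exact hφ.slope_mono_adjacent (Set.mem_univ k) (Set.mem_univ y) hkm hy

theorem exists_eq_affine_add_sum_hinge (hφ : ConvexOn ℝ Set.univ φ) (S : Finset ℝ) :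
    ∃ (a b : ℝ) (c : ℝ → ℝ), (∀ t, 0 ≤ c t) ∧
      ∀ x ∈ S, φ x = a * x + b + ∑ t ∈ S, c t * (x - t)⁺ := by
  obtain ⟨M, hM⟩ := S.exists_le
  obtain ⟨a, b, c, hc, hinterp, -⟩ := exists_eq_affine_add_sum_hinge_of_forall_lt hφ S (M + 1)
    fun t ht => (hM t ht).trans_lt (lt_add_one M)
  exact ⟨a, b, c, hc, fun x hx => hinterp x (mem_insert_of_mem hx)⟩

theorem sum_mul_eq_of_eq_affine_add_sum_hinge {ι : Type*} [Fintype ι] {S : Finset ℝ} {a b : ℝ}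
    {c : ℝ → ℝ} (hφ : ∀ z ∈ S, φ z = a * z + b + ∑ t ∈ S, c t * (z - t)⁺) (w : ι → ℝ) {x : ι → ℝ}
    (hx : ∀ i, x i ∈ S) :
    ∑ i, w i * φ (x i) =
      a * ∑ i, w i * x i + b * ∑ i, w i + ∑ t ∈ S, c t * ∑ i, w i * (x i - t)⁺ := by
  simp only [hφ _ (hx _), mul_add, sum_add_distrib, mul_sum]
  rw [sum_comm (s := S)]
  simp only [mul_left_comm, mul_comm b]

end HingeInterpolation

section ConvexOrder

variable {ι κ : Type*} [Fintype ι] [Fintype κ] {w x : ι → ℝ} {w' x' : κ → ℝ}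

theorem sum_mul_eq_of_sum_mul_abs_sub_le (hmass : ∑ j, w' j = ∑ i, w i)
    (habs : ∀ t : ℝ, ∑ j, w' j * |x' j - t| ≤ ∑ i, w i * |x i - t|) :
    ∑ j, w' j * x' j = ∑ i, w i * x i := by
  -- For `|t|` large, `|x - t|` is affine in `x` on the finitely many points involved.
  obtain ⟨M, hM⟩ := (univ.image (fun i => |x i|) ∪ univ.image (fun j => |x' j|)).exists_le
  have hx (i : ι) : |x i| ≤ M := hM _ (by simp)
  have hx' (j : κ) : |x' j| ≤ M := hM _ (by simp)
  apply le_antisymm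
  · have h := habs (-M)
    have hi (i : ι) : |x i - -M| = x i + M := by
      rw [sub_neg_eq_add, abs_of_nonneg (neg_le_iff_add_nonneg.1 (abs_le.1 (hx i)).1)]
    have hj (j : κ) : |x' j - -M| = x' j + M := by
      rw [sub_neg_eq_add, abs_of_nonneg (neg_le_iff_add_nonneg.1 (abs_le.1 (hx' j)).1)]
    simpa only [hi, hj, mul_add, sum_add_distrib, ← sum_mul, hmass, add_le_add_iff_right] using h
  · have h := habs M
    have hi (i : ι) : |x i - M| = M - x i := by
      rw [abs_of_nonpos (sub_nonpos.2 (abs_le.1 (hx i)).2), neg_sub]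
    have hj (j : κ) : |x' j - M| = M - x' j := by
      rw [abs_of_nonpos (sub_nonpos.2 (abs_le.1 (hx' j)).2), neg_sub]
    simpa only [hi, hj, mul_sub, sum_sub_distrib, ← sum_mul, hmass, sub_le_sub_iff_left] using h

theorem sum_mul_posPart_sub_le (hmass : ∑ j, w' j = ∑ i, w i)
    (habs : ∀ t : ℝ, ∑ j, w' j * |x' j - t| ≤ ∑ i, w i * |x i - t|) (t : ℝ) :
    ∑ j, w' j * (x' j - t)⁺ ≤ ∑ i, w i * (x i - t)⁺ := by
  have hinge_eq (y : ℝ) : (y - t)⁺ = (|y - t| + (y - t)) / 2 := by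
    rw [abs_add_eq_two_nsmul_posPart, nsmul_eq_mul, Nat.cast_ofNat,
      mul_div_cancel_left₀ _ two_ne_zero]
  simp only [hinge_eq, mul_div_assoc', mul_add, mul_sub, sum_add_distrib, sum_sub_distrib,
    ← sum_div, ← sum_mul, hmass, sum_mul_eq_of_sum_mul_abs_sub_le hmass habs]
  gcongr
  exact habs t

theorem sum_mul_convexOn_le (hmass : ∑ j, w' j = ∑ i, w i)
    (habs : ∀ t : ℝ, ∑ j, w' j * |x' j - t| ≤ ∑ i, w i * |x i - t|)
    {φ : ℝ → ℝ} (hφ : ConvexOn ℝ Set.univ φ) :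
    ∑ j, w' j * φ (x' j) ≤ ∑ i, w i * φ (x i) := by
  let S : Finset ℝ := univ.image x ∪ univ.image x'
  obtain ⟨a, b, c, hc, hinterp⟩ := exists_eq_affine_add_sum_hinge hφ S
  rw [sum_mul_eq_of_eq_affine_add_sum_hinge hinterp w' (by simp [S]),
    sum_mul_eq_of_eq_affine_add_sum_hinge hinterp w (by simp [S]), hmass,
    sum_mul_eq_of_sum_mul_abs_sub_le hmass habs]
  gcongr with t _
  · exact hc t
  · exact sum_mul_posPart_sub_le hmass habs t

end ConvexOrder

section Separation

theorem convexOn_finset_sup' {κ F : Type*} [AddCommGroup F] [Module ℝ F] {C : Set F}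
    {s : Finset κ} (hs : s.Nonempty) {f : κ → F → ℝ} (hf : ∀ j ∈ s, ConvexOn ℝ C (f j)) :
    ConvexOn ℝ C (s.sup' hs f) :=
  sup'_induction hs f (fun _ h₁ _ h₂ => h₁.sup h₂) hf

variable {ι κ : Type*} [Fintype ι] [Fintype κ]
  {E : Type*} [AddCommGroup E] [Module ℝ E] [TopologicalSpace E] [IsTopologicalAddGroup E]
  [ContinuousSMul ℝ E] [LocallyConvexSpace ℝ E] [T2Space E]

theorem exists_stdSimplex_sum_smul_eq (v : ι → E) (w : κ → E)
    (h : ∀ f : κ → StrongDual ℝ E, ∃ c : ι → κ, ∑ j, f j (w j) ≤ ∑ i, f (c i) (v i)) :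
    ∃ H : ι → κ → ℝ, (∀ i, H i ∈ stdSimplex ℝ κ) ∧ ∀ j, ∑ i, H i j • v i = w j := by
  classical
  let T : (ι → κ → ℝ) →ₗ[ℝ] (κ → E) :=
    { toFun := fun H j => ∑ i, H i j • v i
      map_add' := fun _ _ => by ext; simp [add_smul, sum_add_distrib]
      map_smul' := fun _ _ => by ext; simp [mul_smul, smul_sum] }
  let K : Set (ι → κ → ℝ) := Set.univ.pi fun _ => stdSimplex ℝ κ
  have hK_compact : IsCompact K := isCompact_univ_pi fun _ => isCompact_stdSimplex ℝ κ
  have hK_convex : Convex ℝ K := convex_pi fun _ _ => convex_stdSimplex ℝ κ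
  suffices hw : w ∈ T '' K by
    obtain ⟨H, hH, rfl⟩ := hw
    exact ⟨H, fun i => hH i trivial, fun _ => rfl⟩
  by_contra hw
  obtain ⟨f, u, hfu, huf⟩ := geometric_hahn_banach_closed_point
    (hK_convex.linear_image T) (hK_compact.image T.continuous_of_finiteDimensional).isClosed hw
  obtain ⟨c, hc⟩ := h fun j => f.comp (ContinuousLinearMap.single ℝ (fun _ => E) j)
  have hvertex : (fun i => Pi.single (c i) 1) ∈ K := fun i _ => single_mem_stdSimplex ℝ (c i)
  have hT_vertex : T (fun i => Pi.single (c i) 1) = ∑ i, Pi.single (c i) (v i) := by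
    ext j
    simp [T, Pi.single_apply]
  rw [f.sum_comp_single] at hc
  refine (hc.trans_lt ?_).false
  calc ∑ i, f (Pi.single (c i) (v i)) = f (T fun i => Pi.single (c i) 1) := by
        rw [hT_vertex, map_sum]
    _ < u := hfu _ (Set.mem_image_of_mem T hvertex)
    _ < f w := huf

-- The hard direction of the Blackwell–Sherman–Stein theorem, for finitely supported weights.
theorem exists_stdSimplex_of_sum_mul_convexOn_le [Nonempty κ] {a : ι → ℝ} {x : ι → E} {b : κ → ℝ}
    {y : κ → E} (hb : ∀ j, 0 ≤ b j)
    (h : ∀ φ : E → ℝ, ConvexOn ℝ Set.univ φ → ∑ j, b j * φ (y j) ≤ ∑ i, a i * φ (x i)) :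
    ∃ H : ι → κ → ℝ, (∀ i, H i ∈ stdSimplex ℝ κ) ∧
      (∀ j, ∑ i, H i j • a i • x i = b j • y j) ∧ ∀ j, ∑ i, H i j * a i = b j := by
  suffices hpair : ∃ H : ι → κ → ℝ, (∀ i, H i ∈ stdSimplex ℝ κ) ∧
      ∀ j, ∑ i, H i j • a i • (x i, (1 : ℝ)) = b j • (y j, (1 : ℝ)) by
    simpa [Prod.ext_iff, Prod.fst_sum, Prod.snd_sum, forall_and] using hpair
  refine exists_stdSimplex_sum_smul_eq _ _ fun f => ?_
  let ℓ (j : κ) (z : E) : ℝ := f j (z, 1)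
  let lift : E →ᵃ[ℝ] E × ℝ := (AffineMap.id ℝ E).prod (AffineMap.const ℝ E 1)
  have hℓ (j : κ) : ConvexOn ℝ Set.univ (ℓ j) :=
    ((f j).toLinearMap.convexOn convex_univ).comp_affineMap lift
  let φ : E → ℝ := univ.sup' univ_nonempty ℓ
  choose c _ hc using fun i => exists_mem_eq_sup' (univ_nonempty (α := κ)) fun j => ℓ j (x i)
  refine ⟨c, ?_⟩
  calc ∑ j, f j (b j • (y j, 1)) = ∑ j, b j * ℓ j (y j) := by simp only [map_smul, smul_eq_mul, ℓ]
    _ ≤ ∑ j, b j * φ (y j) := by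
        gcongr with j _
        · exact hb j
        · exact le_sup' ℓ (mem_univ j) (y j)
    _ ≤ ∑ i, a i * φ (x i) := h φ (convexOn_finset_sup' _ fun j _ => hℓ j)
    _ = ∑ i, f (c i) (a i • (x i, 1)) := by
        simp only [φ, Finset.sup'_apply, hc, map_smul, smul_eq_mul, ℓ]

end Separation

theorem gibbsStochastic_iff_abs_ineq_general {ι κ : Type*} [Fintype ι] [Fintype κ]
    (p g : ι → ℝ) (p' g' : κ → ℝ) (hg : ∀ i, 0 < g i) (hg' : ∀ j, 0 < g' j)
    (hmass : ∑ j, g' j = ∑ i, g i) :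
    (∃ G : Matrix κ ι ℝ,
      (∀ j i, 0 ≤ G j i) ∧ (∀ i, ∑ j, G j i = 1) ∧
      G.mulVec p = p' ∧ G.mulVec g = g') ↔
    (∀ t : ℝ, ∑ j, g' j * |p' j / g' j - t| ≤ ∑ i, g i * |p i / g i - t|) := by
  constructor
  · rintro ⟨G, hG, hG_sum, rfl, rfl⟩ t
    rw [sum_mul_abs_div_sub hg, sum_mul_abs_div_sub hg', ← Matrix.mulVec_smul,
      ← Matrix.mulVec_sub]
    exact sum_abs_mulVec_le hG hG_sum _
  · intro habs
    rcases isEmpty_or_nonempty κ with hκ | hκ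
    · have hι : IsEmpty ι := by
        by_contra! hι
        exact (sum_pos (fun i _ => hg i) univ_nonempty).ne (by simpa using hmass)
      exact ⟨0, isEmptyElim, isEmptyElim, Subsingleton.elim _ _, Subsingleton.elim _ _⟩
    · obtain ⟨H, hH, hHp, hHg⟩ := exists_stdSimplex_of_sum_mul_convexOn_le (fun j => (hg' j).le)
        fun φ hφ => sum_mul_convexOn_le hmass habs hφ
      simp only [smul_eq_mul, mul_div_cancel₀ _ (hg _).ne', mul_div_cancel₀ _ (hg' _).ne'] at hHp
      exact ⟨fun j i => H i j, fun j i => (hH i).1 j, fun i => (hH i).2, funext hHp, funext hHg⟩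

/-- Existence of a Gibbs-stochastic matrix is equivalent to the
`|r - t|` inequalities (conditions (a) ⇔ (e) of the mixing-distance theorem). -/
theorem gibbsStochastic_iff_abs_ineq
    {n n' : ℕ} (p g : Fin n → ℝ) (p' g' : Fin n' → ℝ)
    (hp : ∀ i, 0 ≤ p i) (hps : ∑ i, p i = 1)
    (hp' : ∀ j, 0 ≤ p' j) (hps' : ∑ j, p' j = 1)
    (hg : ∀ i, 0 < g i) (hgs : ∑ i, g i = 1)
    (hg' : ∀ j, 0 < g' j) (hgs' : ∑ j, g' j = 1) :
    (∃ G : Matrix (Fin n') (Fin n) ℝ,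
      (∀ j i, 0 ≤ G j i) ∧ (∀ i, ∑ j, G j i = 1) ∧
      G.mulVec p = p' ∧ G.mulVec g = g') ↔
    (∀ t : ℝ, ∑ j, g' j * |p' j / g' j - t| ≤ ∑ i, g i * |p i / g i - t|) :=
  gibbsStochastic_iff_abs_ineq_general p g p' g' hg hg' (hgs'.trans hgs.symm)
end
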